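/- For every 0 < ε < 1 there exist C, δ > 0 such that, for p ≥ C log n / n, the binomial random graph G = G_{n,p} asymptotically almost surely satisfies the following: for every H ∈ H^ε_{n,p}(G), the graph G ∖ H complements every graph R ⊆ G that satisfies property RE(1/2 + ε/4) and has at most δn²p edges. -/

import Mathlib

/-!
Suppose that `G \ H` fails to complement `R` at the path `P`. Let `T_v` be the set of ends of all
paths of `R ∪ P` that start at `v` and have the vertex set of `P`. Then there are at least `c * n`
vertices `v` with `|T_v| ≥ c * n`, and all the edges of `G` from such a `v` to `T_v` belong to `H`.
The degree condition on `H` provides a linear number of such vertices, forming a set `A`, whose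
degrees in `H` are so small that `G` has at least `τ * n ^ 2 * p` fewer edges between the `v ∈ A`
and the sets `T_v \ A` than expected.

For given `R`, `P` and `A` these pairs are disjoint from `R`, so by Chernoff's inequality this has
probability at most `exp (-τ ^ 2 * n ^ 2 * p)`, independently of the event `R ⊆ G`, which has
probability `p ^ |R|`. Summing `p ^ |R|` over all `R` with at most `δ * n ^ 2 * p` edges gives only
`exp (O (√δ) * n ^ 2 * p)`, and there are only `exp (O (n * log n))` pairs `(P, A)`; the union bound
succeeds for small `δ` and large `C`.
-/

open Filter Real

namespace Resilience

variable {V : Type*}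

/-- The degree of a vertex, as the cardinality of its neighbourhood. -/
noncomputable def deg (G : SimpleGraph V) (v : V) : ℕ := (G.neighborSet v).ncard

/-- The neighbourhood of a set of vertices: all vertices with a neighbour in `X`. -/
def nbhd (G : SimpleGraph V) (X : Set V) : Set V := {v | ∃ x ∈ X, G.Adj v x}

/-- The minimum degree over a set of vertices. -/
noncomputable def minDeg (G : SimpleGraph V) (X : Set V) : ℕ :=
  sInf ((fun v => deg G v) '' X)

/-- The number of edges of `G` with one endpoint in `X` and the other in `Y`. -/
noncomputable def eBetween (G : SimpleGraph V) (X Y : Set V) : ℕ :=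
  {e ∈ G.edgeSet | ∃ x ∈ X, ∃ y ∈ Y, e = s(x, y)}.ncard

/-- The number of edges of `G` with both endpoints in `A`. -/
noncomputable def eIn (G : SimpleGraph V) (A : Set V) : ℕ :=
  {e ∈ G.edgeSet | ∀ v ∈ e, v ∈ A}.ncard

/-- The graph on `V` whose edges are the consecutive pairs of the list `l`;
this lets us view a path, recorded as a list of distinct vertices, as a graph. -/
def listGraph (l : List V) : SimpleGraph V :=
  SimpleGraph.fromEdgeSet {e | ∃ q ∈ l.zip l.tail, e = s(q.1, q.2)}

/-- `l` is a (nonempty) path on `V` all of whose edges lie in `G`. -/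
def IsPathOn (G : SimpleGraph V) (l : List V) : Prop :=
  l ≠ [] ∧ l.Nodup ∧ l.Chain' G.Adj

/-- `l` is a longest path with all edges in `G`. -/
def IsLongestPathOn (G : SimpleGraph V) (l : List V) : Prop :=
  IsPathOn G l ∧ ∀ l' : List V, IsPathOn G l' → l'.length ≤ l.length

/-- `l'` is obtained from the path `l` (with fixed last endpoint) by a single rotation
within `G`, whose broken edge lies on the original path `P`.  Writing
`l = a :: t₁ ++ c :: b :: t₂`, the pivot is `b`, the new edge is `ab ∈ G`, the broken
edge is `cb` (an edge of `P`), and the rotated path is `(a :: t₁ ++ [c]).reverse ++ b :: t₂`. -/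
def IsRotation (G : SimpleGraph V) (P l l' : List V) : Prop :=
  ∃ (a c b : V) (t₁ t₂ : List V),
    l = a :: t₁ ++ c :: b :: t₂ ∧ G.Adj a b ∧ (listGraph P).Adj c b ∧
    l' = (a :: t₁ ++ [c]).reverse ++ b :: t₂

/-- The set of paths obtainable from `P` by at most `t` successive rotations within `G`
with fixed last endpoint, all broken edges lying on `P`. -/
def rotSet (G : SimpleGraph V) (P : List V) : ℕ → Set (List V)
  | 0 => {P}
  | t + 1 => rotSet G P t ∪ {l' | ∃ l ∈ rotSet G P t, IsRotation G P l l'}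

/-- `R^t_{G,P,u}`: the set of endpoints of paths obtainable from `P` by at most `t`
successive rotations within `G` with fixed last endpoint. -/
def Rset (G : SimpleGraph V) (P : List V) (t : ℕ) : Set V :=
  {x | ∃ l ∈ rotSet G P t, l.head? = some x}

/-- The family `H^ε_{n,p}` of Pósa-type subgraphs: there is an ordering of the vertices
with non-increasing degrees such that `d_H(v_i) ≤ (n-i)p - εnp` for all `i < n/2`
(1-based indexing). -/
def PosaFamily (n : ℕ) (p ε : ℝ) (H : SimpleGraph (Fin n)) : Prop :=
  ∃ v : Fin n → Fin n, Function.Bijective v ∧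
    (∀ i j : Fin n, i ≤ j → deg H (v j) ≤ deg H (v i)) ∧
    ∀ i : Fin n, ((i.1 : ℝ) + 1) < n / 2 →
      (deg H (v i) : ℝ) ≤ ((n : ℝ) - ((i.1 : ℝ) + 1)) * p - ε * n * p

/-- The family `H^{ε,δ}_{n,p}` of (shifted) Chvátal-type subgraphs, where the shift
`δn` is recorded as a natural number `s`: there is an ordering of the vertices with
non-increasing degrees such that for all `i < n/2` (1-based indexing), either
`d_H(v_i) ≤ (n-i)p - εnp` or `d_H(v_{n-i-s}) ≤ ip - εnp`. -/
def ChvatalFamily (n : ℕ) (p ε : ℝ) (s : ℕ) (H : SimpleGraph (Fin n)) : Prop :=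
  ∃ v : Fin n → Fin n, Function.Bijective v ∧
    (∀ i j : Fin n, i ≤ j → deg H (v j) ≤ deg H (v i)) ∧
    ∀ i : Fin n, ((i.1 : ℝ) + 1) < n / 2 →
      ((deg H (v i) : ℝ) ≤ ((n : ℝ) - ((i.1 : ℝ) + 1)) * p - ε * n * p ∨
       (deg H (v ⟨n - (i.1 + 1) - s - 1, by have := i.2; omega⟩) : ℝ) ≤
         ((i.1 : ℝ) + 1) * p - ε * n * p)

/-- The probability weight of a fixed graph `G` in the binomial random graph `G_{n,p}`. -/
noncomputable def weight (n : ℕ) (p : ℝ) (G : SimpleGraph (Fin n)) : ℝ :=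
  p ^ G.edgeSet.ncard * (1 - p) ^ (n.choose 2 - G.edgeSet.ncard)

open Classical in
/-- The probability that the binomial random graph `G_{n,p}` satisfies the property `Q`. -/
noncomputable def Pr (n : ℕ) (p : ℝ) (Q : SimpleGraph (Fin n) → Prop) : ℝ :=
  ∑ G : SimpleGraph (Fin n), if Q G then weight n p G else 0

/-- Property `RE(δ)` for a (connected) graph `G` on `n` vertices: for every path `P`
on the vertex set, either `G ∪ P` has a longer path, or there are at least `δn` vertices
`v`, each with a set `T v` of at least `δn` vertices `w`, such that `G ∪ P` has a path
from `v` to `w` with the same vertex set as `P`. -/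
def RE (n : ℕ) (δ : ℝ) (G : SimpleGraph (Fin n)) : Prop :=
  G.Connected ∧
  ∀ P : List (Fin n), P ≠ [] → P.Nodup →
    (∃ Q : List (Fin n), IsPathOn (G ⊔ listGraph P) Q ∧ P.length < Q.length) ∨
    (∃ S : Set (Fin n), δ * n ≤ S.ncard ∧
      ∃ T : Fin n → Set (Fin n), (∀ v ∈ S, δ * n ≤ (T v).ncard) ∧
        ∀ v ∈ S, ∀ w ∈ T v, ∃ Q : List (Fin n),
          IsPathOn (G ⊔ listGraph P) Q ∧ Q.head? = some v ∧ Q.getLast? = some w ∧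
          Q.toFinset = P.toFinset)

/-- `G₂` complements `G₁` (with respect to parameter `δ` as in `RE(δ)`): for every path
`P` on the vertex set, either `G₁ ∪ P` has a longer path, or there are sets `S`, `T v`
as in the definition of `RE(δ)` together with `v ∈ S` and `w ∈ T v` such that `vw` is an
edge of `G₁ ∪ G₂`. -/
def Complements (n : ℕ) (δ : ℝ) (G₁ G₂ : SimpleGraph (Fin n)) : Prop :=
  ∀ P : List (Fin n), P ≠ [] → P.Nodup →
    (∃ Q : List (Fin n), IsPathOn (G₁ ⊔ listGraph P) Q ∧ P.length < Q.length) ∨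
    (∃ S : Set (Fin n), δ * n ≤ S.ncard ∧
      ∃ T : Fin n → Set (Fin n), (∀ v ∈ S, δ * n ≤ (T v).ncard) ∧
        (∀ v ∈ S, ∀ w ∈ T v, ∃ Q : List (Fin n),
          IsPathOn (G₁ ⊔ listGraph P) Q ∧ Q.head? = some v ∧ Q.getLast? = some w ∧
          Q.toFinset = P.toFinset) ∧
        ∃ v ∈ S, ∃ w ∈ T v, (G₁ ⊔ G₂).Adj v w)

section RandomGraph

lemma card_filter_mem_edgeSet (G : SimpleGraph V) [Fintype (⊤ : SimpleGraph V).edgeSet]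
    [DecidablePred (· ∈ G.edgeSet)] :
    ((⊤ : SimpleGraph V).edgeFinset.filter (· ∈ G.edgeSet)).card = G.edgeSet.ncard := by
  rw [← Set.ncard_coe_finset]
  congr 1
  ext e
  simpa using G.not_isDiag_of_mem_edgeSet

lemma pow_ncard_edgeSet {M : Type*} [CommMonoid M] (G : SimpleGraph V)
    [Fintype (⊤ : SimpleGraph V).edgeSet] [DecidablePred (· ∈ G.edgeSet)] (x : M) :
    x ^ G.edgeSet.ncard =
      ∏ e ∈ (⊤ : SimpleGraph V).edgeFinset, if e ∈ G.edgeSet then x else 1 := by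
  rw [← Finset.prod_filter, Finset.prod_const, card_filter_mem_edgeSet]

lemma sum_prod_edgeFinset_top {R : Type*} [CommSemiring R] [Fintype V] [DecidableEq V]
    [∀ G : SimpleGraph V, DecidablePred (· ∈ G.edgeSet)] (f g : Sym2 V → R) :
    ∑ G : SimpleGraph V, ∏ e ∈ (⊤ : SimpleGraph V).edgeFinset,
        (if e ∈ G.edgeSet then f e else g e) =
      ∏ e ∈ (⊤ : SimpleGraph V).edgeFinset, (f e + g e) := by
  rw [Finset.prod_add]
  refine Finset.sum_bij' (fun G _ => (⊤ : SimpleGraph V).edgeFinset.filter (· ∈ G.edgeSet))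
    (fun s _ => SimpleGraph.fromEdgeSet ↑s) (fun G _ => ?_) (fun s _ => Finset.mem_univ _)
    (fun G _ => ?_) (fun s hs => ?_) (fun G _ => ?_)
  · exact Finset.mem_powerset.2 (Finset.filter_subset _ _)
  · rw [← SimpleGraph.edgeSet_inj]
    ext e
    have hnd : e ∈ G.edgeSet → ¬ e.IsDiag := G.not_isDiag_of_mem_edgeSet
    simp only [SimpleGraph.edgeSet_fromEdgeSet, Finset.coe_filter, SimpleGraph.mem_edgeFinset,
      SimpleGraph.edgeSet_top, Set.mem_sdiff, Set.mem_ofPred_eq, Set.mem_compl_iff,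
      Sym2.mem_diagSet]
    tauto
  · ext e
    have hnd : e ∈ s → ¬ e.IsDiag := fun he => by simpa using Finset.mem_powerset.1 hs he
    simpa [and_comm] using hnd
  · rw [Finset.prod_ite, Finset.filter_not]

lemma ncard_edgeSet_le_choose_two [Fintype V] (G : SimpleGraph V) :
    G.edgeSet.ncard ≤ (Fintype.card V).choose 2 := by
  classical
  rw [← card_filter_mem_edgeSet, ← SimpleGraph.card_edgeFinset_top_eq_card_choose_two]
  exact Finset.card_filter_le _ _

lemma weight_eq_prod (n : ℕ) (p : ℝ) (G : SimpleGraph (Fin n)) [DecidablePred (· ∈ G.edgeSet)] :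
    weight n p G =
      ∏ e ∈ (⊤ : SimpleGraph (Fin n)).edgeFinset, if e ∈ G.edgeSet then p else 1 - p := by
  rw [weight, Finset.prod_ite, Finset.prod_const, Finset.prod_const, Finset.filter_not,
    Finset.card_sdiff_of_subset (Finset.filter_subset _ _), card_filter_mem_edgeSet,
    SimpleGraph.card_edgeFinset_top_eq_card_choose_two, Fintype.card_fin]

lemma weight_nonneg {n : ℕ} {p : ℝ} (hp0 : 0 ≤ p) (hp1 : p ≤ 1) (G : SimpleGraph (Fin n)) :
    0 ≤ weight n p G :=
  mul_nonneg (pow_nonneg hp0 _) (pow_nonneg (sub_nonneg.2 hp1) _)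

lemma sum_weight (n : ℕ) (p : ℝ) : ∑ G : SimpleGraph (Fin n), weight n p G = 1 := by
  classical
  simp only [weight_eq_prod, sum_prod_edgeFinset_top, add_sub_cancel, Finset.prod_const_one]

lemma sum_pow_ncard_edgeSet {R : Type*} [CommSemiring R] [Fintype V] [DecidableEq V] (x : R) :
    ∑ G : SimpleGraph V, x ^ G.edgeSet.ncard = (x + 1) ^ (Fintype.card V).choose 2 := by
  classical
  simp only [pow_ncard_edgeSet, sum_prod_edgeFinset_top, Finset.prod_const,
    SimpleGraph.card_edgeFinset_top_eq_card_choose_two]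

open Classical in
lemma sum_weight_mul_pow_ncard_inf {n : ℕ} (p q : ℝ) {R D : SimpleGraph (Fin n)}
    (hRD : Disjoint R D) :
    ∑ G : SimpleGraph (Fin n),
        (if R ≤ G then weight n p G * q ^ (G ⊓ D).edgeSet.ncard else 0) =
      p ^ R.edgeSet.ncard * (1 - p + p * q) ^ D.edgeSet.ncard := by
  have hdisj (e) (hR : e ∈ R.edgeSet) : e ∉ D.edgeSet :=
    Set.disjoint_left.1 (SimpleGraph.disjoint_edgeSet.2 hRD) hR
  have hle (G : SimpleGraph (Fin n)) : R ≤ G ↔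
      ∀ e ∈ (⊤ : SimpleGraph (Fin n)).edgeFinset, e ∈ R.edgeSet → e ∈ G.edgeSet := by
    simp only [← SimpleGraph.edgeSet_subset_edgeSet, SimpleGraph.mem_edgeFinset]
    exact ⟨fun h e _ he => h he, fun h e he => h e (SimpleGraph.edgeSet_mono le_top he) he⟩
  have hfactor (G : SimpleGraph (Fin n)) :
      (if R ≤ G then weight n p G * q ^ (G ⊓ D).edgeSet.ncard else 0) =
        ∏ e ∈ (⊤ : SimpleGraph (Fin n)).edgeFinset,
          if e ∈ G.edgeSet then (if e ∈ D.edgeSet then p * q else p)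
          else (if e ∈ R.edgeSet then 0 else 1 - p) := by
    have hind : (if R ≤ G then (1 : ℝ) else 0) =
        ∏ e ∈ (⊤ : SimpleGraph (Fin n)).edgeFinset,
          if e ∈ R.edgeSet → e ∈ G.edgeSet then 1 else 0 := by
      rw [Finset.prod_boole]
      congr 1
      exact propext (hle G)
    rw [← mul_boole, hind, weight_eq_prod, pow_ncard_edgeSet, ← Finset.prod_mul_distrib,
      ← Finset.prod_mul_distrib]
    refine Finset.prod_congr rfl fun e _ => ?_
    simp only [SimpleGraph.edgeSet_inf, Set.mem_inter_iff]
    split_ifs <;> simp_all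
  simp only [hfactor, sum_prod_edgeFinset_top]
  rw [pow_ncard_edgeSet, pow_ncard_edgeSet, ← Finset.prod_mul_distrib]
  refine Finset.prod_congr rfl fun e _ => ?_
  by_cases hR : e ∈ R.edgeSet
  · simp [hR, hdisj e hR]
  · by_cases hD : e ∈ D.edgeSet
    · simp [hR, hD, add_comm]
    · simp [hR, hD]

end RandomGraph

section Probability

variable {n : ℕ} {p : ℝ}

lemma one_sub_Pr (n : ℕ) (p : ℝ) (Q : SimpleGraph (Fin n) → Prop) :
    1 - Pr n p Q = Pr n p fun G => ¬ Q G := by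
  classical
  rw [← sum_weight n p, Pr, Pr, ← Finset.sum_sub_distrib]
  refine Finset.sum_congr rfl fun G _ => ?_
  by_cases hG : Q G <;> simp [hG]

lemma Pr_le_sum {Q : SimpleGraph (Fin n) → Prop} {f : SimpleGraph (Fin n) → ℝ}
    (hf : ∀ G, 0 ≤ f G) (hQ : ∀ G, Q G → weight n p G ≤ f G) : Pr n p Q ≤ ∑ G, f G := by
  refine Finset.sum_le_sum fun G _ => ?_
  split_ifs with hG
  exacts [hQ G hG, hf G]

lemma ite_weight_nonneg (hp0 : 0 ≤ p) (hp1 : p ≤ 1) (Q : Prop) [Decidable Q]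
    (G : SimpleGraph (Fin n)) : 0 ≤ if Q then weight n p G else 0 := by
  split_ifs
  exacts [weight_nonneg hp0 hp1 G, le_rfl]

lemma Pr_mono (hp0 : 0 ≤ p) (hp1 : p ≤ 1) {Q Q' : SimpleGraph (Fin n) → Prop}
    (h : ∀ G, Q G → Q' G) : Pr n p Q ≤ Pr n p Q' := by
  classical
  exact Pr_le_sum (fun G => ite_weight_nonneg hp0 hp1 _ G) fun G hG => (if_pos (h G hG)).ge

lemma Pr_exists_mem_le (hp0 : 0 ≤ p) (hp1 : p ≤ 1) {ι : Type*} (s : Finset ι)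
    (Q : ι → SimpleGraph (Fin n) → Prop) :
    Pr n p (fun G => ∃ i ∈ s, Q i G) ≤ ∑ i ∈ s, Pr n p (Q i) := by
  classical
  simp only [Pr]
  rw [Finset.sum_comm]
  have hnonneg (G i) (_ : i ∈ s) := ite_weight_nonneg hp0 hp1 (Q i G) G
  refine Pr_le_sum (fun G => Finset.sum_nonneg (hnonneg G)) fun G ⟨i, hi, hQ⟩ => ?_
  exact (if_pos hQ).ge.trans (Finset.single_le_sum (hnonneg G) hi)

lemma exp_neg_le_one_sub_add_sq_div_two {x : ℝ} (hx : 0 ≤ x) : exp (-x) ≤ 1 - x + x ^ 2 / 2 := by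
  rw [exp_neg, inv_le_comm₀ (exp_pos x) (by nlinarith [sq_nonneg (x - 1)])]
  refine le_trans ?_ (quadratic_le_exp_of_nonneg hx)
  rw [inv_le_iff_one_le_mul₀ (by nlinarith [sq_nonneg (x - 1)])]
  nlinarith [sq_nonneg (x ^ 2)]

/-- Chernoff's lower-tail argument with Laplace parameter `θ`. Edges in `R` and in `D` are
independent, so requiring `R ≤ G` only contributes the factor `p ^ |R|`. -/
lemma Pr_le_and_ncard_inf_le (hp0 : 0 ≤ p) (hp1 : p ≤ 1) {R D : SimpleGraph (Fin n)}
    (hRD : Disjoint R D) {θ : ℝ} (hθ : 0 ≤ θ) (t : ℝ) :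
    Pr n p (fun G => R ≤ G ∧ ((G ⊓ D).edgeSet.ncard : ℝ) ≤ D.edgeSet.ncard * p - t) ≤
      p ^ R.edgeSet.ncard * exp (θ ^ 2 / 2 * (D.edgeSet.ncard * p) - θ * t) := by
  classical
  set d := D.edgeSet.ncard
  set q := exp (-θ) with hq
  let laplace (G : SimpleGraph (Fin n)) : ℝ :=
    exp (θ * (d * p - t)) * if R ≤ G then weight n p G * q ^ (G ⊓ D).edgeSet.ncard else 0
  have hlaplace (G) : 0 ≤ laplace G := by
    have := weight_nonneg hp0 hp1 G
    simp only [laplace]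
    positivity
  have hmarkov (G) (hG : R ≤ G ∧ ((G ⊓ D).edgeSet.ncard : ℝ) ≤ d * p - t) :
      weight n p G ≤ laplace G := by
    have hone : 1 ≤ exp (θ * (d * p - t)) * q ^ (G ⊓ D).edgeSet.ncard := by
      rw [hq, ← exp_nat_mul, ← exp_add, one_le_exp_iff]
      linarith [mul_le_mul_of_nonneg_left hG.2 hθ]
    simp only [laplace, if_pos hG.1]
    rw [mul_left_comm]
    exact le_mul_of_one_le_right (weight_nonneg hp0 hp1 G) hone
  have hq0 : 0 ≤ 1 - p + p * q := add_nonneg (sub_nonneg.2 hp1) (mul_nonneg hp0 (exp_pos _).le)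
  have hfactor : 1 - p + p * q ≤ exp (p * (θ ^ 2 / 2 - θ)) := by
    have hexp := mul_le_mul_of_nonneg_left (exp_neg_le_one_sub_add_sq_div_two hθ) hp0
    linarith [add_one_le_exp (p * (θ ^ 2 / 2 - θ))]
  calc
    _ ≤ ∑ G, laplace G := Pr_le_sum hlaplace hmarkov
    _ = exp (θ * (d * p - t)) * (p ^ R.edgeSet.ncard * (1 - p + p * q) ^ d) := by
      rw [← Finset.mul_sum, sum_weight_mul_pow_ncard_inf p q hRD]
    _ ≤ exp (θ * (d * p - t)) * (p ^ R.edgeSet.ncard * exp (p * (θ ^ 2 / 2 - θ)) ^ d) := by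
      have hpow := pow_le_pow_left₀ hq0 hfactor d
      gcongr
    _ = p ^ R.edgeSet.ncard * exp (θ ^ 2 / 2 * (d * p) - θ * t) := by
      rw [mul_left_comm, ← exp_nat_mul, ← exp_add]
      ring_nf

open Classical in
/-- Each term is multiplied by `y ^ (|R| - y ^ 2 * n ^ 2 * p) ≥ 1`, which turns the sum into a full
binomial one. -/
lemma sum_pow_ncard_edgeSet_le (hp0 : 0 ≤ p) {y : ℝ} (hy0 : 0 < y) (hy1 : y ≤ 1) :
    ∑ R : SimpleGraph (Fin n) with (R.edgeSet.ncard : ℝ) ≤ y ^ 2 * (n ^ 2 * p),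
      p ^ R.edgeSet.ncard ≤ exp (2 * y * (n ^ 2 * p)) := by
  set M := (n : ℝ) ^ 2 * p
  have hM : 0 ≤ M := by positivity
  have hlog : log y ≤ 0 := log_nonpos hy0.le hy1
  have hylog : -(y * log y) ≤ 1 := by
    have h := one_sub_inv_le_log_of_pos hy0
    nlinarith [mul_le_mul_of_nonneg_left h hy0.le, mul_inv_cancel₀ hy0.ne']
  have hterm (R : SimpleGraph (Fin n)) (hR : (R.edgeSet.ncard : ℝ) ≤ y ^ 2 * M) :
      p ^ R.edgeSet.ncard ≤ exp (y * M) * (y * p) ^ R.edgeSet.ncard := by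
    have hone : 1 ≤ exp (y * M) * y ^ R.edgeSet.ncard := by
      rw [← exp_log hy0, ← exp_nat_mul, exp_log hy0, ← exp_add, one_le_exp_iff]
      nlinarith [mul_le_mul_of_nonpos_right hR hlog,
        mul_le_mul_of_nonneg_left hylog (mul_nonneg hy0.le hM)]
    rw [mul_pow, ← mul_assoc]
    exact le_mul_of_one_le_left (by positivity) hone
  calc
    _ ≤ ∑ R : SimpleGraph (Fin n) with (R.edgeSet.ncard : ℝ) ≤ y ^ 2 * M,
          exp (y * M) * (y * p) ^ R.edgeSet.ncard :=
      Finset.sum_le_sum fun R hR => hterm R (Finset.mem_filter.1 hR).2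
    _ ≤ ∑ R : SimpleGraph (Fin n), exp (y * M) * (y * p) ^ R.edgeSet.ncard :=
      Finset.sum_le_univ_sum_of_nonneg fun R => by positivity
    _ = exp (y * M) * (y * p + 1) ^ n.choose 2 := by
      rw [← Finset.mul_sum, sum_pow_ncard_edgeSet, Fintype.card_fin]
    _ ≤ exp (y * M) * exp (y * p) ^ n.choose 2 := by
      gcongr
      exact add_one_le_exp _
    _ ≤ exp (2 * y * M) := by
      have hchoose : (n.choose 2 : ℝ) ≤ n ^ 2 := mod_cast Nat.choose_le_pow n 2
      rw [← exp_nat_mul, ← exp_add, exp_le_exp]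
      linarith [mul_le_mul_of_nonneg_right hchoose (mul_nonneg hy0.le hp0)]

lemma Pr_exists_sparse_le (hp0 : 0 ≤ p) (hp1 : p ≤ 1) {ι : Type*} [Fintype ι]
    (D : SimpleGraph (Fin n) → ι → SimpleGraph (Fin n)) (hD : ∀ R i, Disjoint R (D R i))
    {τ : ℝ} (hτ0 : 0 < τ) (hτ1 : τ ≤ 1) :
    Pr n p (fun G => ∃ R ≤ G, (R.edgeSet.ncard : ℝ) ≤ (τ ^ 2 / 4) ^ 2 * (n ^ 2 * p) ∧ ∃ i,
        ((G ⊓ D R i).edgeSet.ncard : ℝ) ≤ (D R i).edgeSet.ncard * p - τ * (n ^ 2 * p)) ≤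
      Fintype.card ι * exp (-(τ ^ 2 / 2 * (n ^ 2 * p))) := by
  classical
  set M := (n : ℝ) ^ 2 * p
  let small : Finset (SimpleGraph (Fin n)) :=
    {R | (R.edgeSet.ncard : ℝ) ≤ (τ ^ 2 / 4) ^ 2 * M}
  let bad (x : SimpleGraph (Fin n) × ι) (G : SimpleGraph (Fin n)) : Prop :=
    x.1 ≤ G ∧
      ((G ⊓ D x.1 x.2).edgeSet.ncard : ℝ) ≤ (D x.1 x.2).edgeSet.ncard * p - τ * M
  have hbad (x) : Pr n p (bad x) ≤ p ^ x.1.edgeSet.ncard * exp (-(τ ^ 2 * M)) := by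
    refine (Pr_le_and_ncard_inf_le hp0 hp1 (hD x.1 x.2) (mul_nonneg zero_le_two hτ0.le) _).trans ?_
    have hcard : ((D x.1 x.2).edgeSet.ncard : ℝ) ≤ n ^ 2 / 2 := by
      have hchoose : ((n.choose 2 : ℕ) : ℝ) ≤ n ^ 2 / 2 := by
        simpa using Nat.choose_le_pow_div (α := ℝ) 2 n
      refine le_trans ?_ hchoose
      simpa using ncard_edgeSet_le_choose_two (D x.1 x.2)
    gcongr
    nlinarith [mul_le_mul_of_nonneg_right hcard (mul_nonneg hp0 (sq_nonneg τ))]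
  calc
    _ ≤ Pr n p (fun G => ∃ x ∈ small ×ˢ Finset.univ, bad x G) :=
      Pr_mono hp0 hp1 fun G ⟨R, hRG, hR, i, hi⟩ => ⟨(R, i), by simpa [small] using hR, hRG, hi⟩
    _ ≤ ∑ x ∈ small ×ˢ Finset.univ, p ^ x.1.edgeSet.ncard * exp (-(τ ^ 2 * M)) :=
      (Pr_exists_mem_le hp0 hp1 _ _).trans (Finset.sum_le_sum fun x _ => hbad x)
    _ = Fintype.card ι * ((∑ R ∈ small, p ^ R.edgeSet.ncard) * exp (-(τ ^ 2 * M))) := by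
      rw [Finset.sum_product, Finset.sum_mul, Finset.mul_sum]
      simp only [Finset.sum_const, Finset.card_univ, nsmul_eq_mul]
    _ ≤ Fintype.card ι * (exp (2 * (τ ^ 2 / 4) * M) * exp (-(τ ^ 2 * M))) := by
      gcongr
      exact sum_pow_ncard_edgeSet_le hp0 (by positivity) (by nlinarith)
    _ = Fintype.card ι * exp (-(τ ^ 2 / 2 * M)) := by
      rw [← exp_add]
      ring_nf

end Probability

section Counting

lemma card_nodup_list_le (α : Type*) [Fintype α] [Fintype {l : List α // l.Nodup}] :
    Fintype.card {l : List α // l.Nodup} ≤ (Fintype.card α + 1) ^ Fintype.card α := by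
  let entries (l : {l : List α // l.Nodup}) (i : Fin (Fintype.card α)) : Option α := l.1[i.1]?
  have hentries : Function.Injective entries := by
    rintro ⟨l, hl⟩ ⟨l', hl'⟩ h
    refine Subtype.ext (List.ext_getElem? fun i => ?_)
    obtain hi | hi := lt_or_ge i (Fintype.card α)
    · exact congrFun h ⟨i, hi⟩
    · rw [List.getElem?_eq_none (hl.length_le_card.trans hi),
        List.getElem?_eq_none (hl'.length_le_card.trans hi)]
  simpa using Fintype.card_le_of_injective entries hentries

lemma card_nodup_list_prod_finset_le {n : ℕ} (hn : 2 ≤ n) :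
    (Fintype.card ({l : List (Fin n) // l.Nodup} × Finset (Fin n)) : ℝ) ≤
      exp (3 * (n * log n)) := by
  have hn0 : (0 : ℝ) < n := by positivity
  have hn2 : (2 : ℝ) ≤ n := mod_cast hn
  have hlists : (Fintype.card {l : List (Fin n) // l.Nodup} : ℝ) ≤ (n + 1) ^ n := by
    exact_mod_cast (card_nodup_list_le (Fin n)).trans_eq (by rw [Fintype.card_fin])
  rw [Fintype.card_prod, Fintype.card_finset, Fintype.card_fin, Nat.cast_mul, Nat.cast_pow,
    Nat.cast_ofNat]
  calc _ ≤ ((n : ℝ) + 1) ^ n * 2 ^ n := by gcongr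
    _ ≤ ((n : ℝ) ^ 2) ^ n * (n : ℝ) ^ n := by
      gcongr
      nlinarith
    _ = exp (log n) ^ (3 * n) := by
      rw [exp_log hn0]
      ring
    _ = exp (3 * (n * log n)) := by
      rw [← exp_nat_mul, Nat.cast_mul, Nat.cast_ofNat, mul_assoc]

end Counting

section CrossingGraph

/-- The graph formed by the pairs `vw` with `v ∈ A` and `w ∈ T v` outside `A`. Excluding `A`
makes it bipartite, so that its edges are counted by the degrees in `A`. -/
def crossingGraph (A : Finset V) (T : V → Set V) : SimpleGraph V :=
  SimpleGraph.fromRel fun v w => v ∈ A ∧ w ∈ T v \ A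

variable {A : Finset V} {T : V → Set V} {G : SimpleGraph V}

lemma crossingGraph_adj_of_mem {v w : V} (hv : v ∈ A) :
    (crossingGraph A T).Adj v w ↔ w ∈ T v \ A := by
  rw [crossingGraph, SimpleGraph.fromRel_adj]
  constructor
  · rintro ⟨-, h | h⟩
    · exact h.2
    · exact absurd hv h.2.2
  · exact fun h => ⟨fun hvw => h.2 (hvw ▸ hv), Or.inl ⟨hv, h⟩⟩

lemma crossingGraph_isBipartiteWith (A : Finset V) (T : V → Set V) :
    (crossingGraph A T).IsBipartiteWith A (A : Set V)ᶜ := by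
  refine ⟨disjoint_compl_right, fun v w h => ?_⟩
  obtain ⟨-, ⟨hv, hw⟩ | ⟨hw, hv⟩⟩ := h
  exacts [Or.inl ⟨hv, hw.2⟩, Or.inr ⟨hv.2, hw⟩]

lemma disjoint_crossingGraph (h : ∀ v ∈ A, ∀ w ∈ T v, ¬ G.Adj v w) :
    Disjoint (crossingGraph A T) G := by
  rw [SimpleGraph.disjoint_left]
  rintro v w ⟨-, ⟨hv, hw⟩ | ⟨hw, hv⟩⟩ hadj
  exacts [h v hv w hw.1 hadj, h w hw v hv.1 hadj.symm]

lemma ncard_edgeSet_eq_sum_deg [Finite V] (hG : G.IsBipartiteWith A (A : Set V)ᶜ) :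
    G.edgeSet.ncard = ∑ v ∈ A, deg G v := by
  classical
  have := Fintype.ofFinite V
  rw [← Finset.coe_compl] at hG
  rw [← SimpleGraph.coe_edgeFinset, Set.ncard_coe_finset,
    ← SimpleGraph.isBipartiteWith_sum_degrees_eq_card_edges hG]
  refine Finset.sum_congr rfl fun v _ => ?_
  rw [deg, Set.ncard_eq_toFinset_card', SimpleGraph.degree, SimpleGraph.neighborFinset]

lemma mul_sub_le_ncard_edgeSet_crossingGraph [Finite V] {t : ℝ}
    (hT : ∀ v ∈ A, t ≤ (T v).ncard) :
    A.card * (t - A.card) ≤ (crossingGraph A T).edgeSet.ncard := by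
  rw [ncard_edgeSet_eq_sum_deg (crossingGraph_isBipartiteWith A T), Nat.cast_sum, ← nsmul_eq_mul]
  refine Finset.card_nsmul_le_sum _ _ _ fun v hv => ?_
  have hnbhd : (crossingGraph A T).neighborSet v = T v \ A :=
    Set.ext fun w => crossingGraph_adj_of_mem hv
  have hdiff : ((T v).ncard : ℝ) ≤ (T v \ A).ncard + A.card := by
    exact_mod_cast Set.ncard_coe_finset A ▸ Set.ncard_le_ncard_sdiff_add_ncard (T v) A
  rw [deg, hnbhd]
  linarith [hT v hv]

lemma ncard_edgeSet_inf_crossingGraph_le [Finite V] {H : SimpleGraph V} {b : ℝ}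
    (hGH : ∀ v ∈ A, ∀ w ∈ T v, G.Adj v w → H.Adj v w) (hH : ∀ v ∈ A, (deg H v : ℝ) ≤ b) :
    ((G ⊓ crossingGraph A T).edgeSet.ncard : ℝ) ≤ A.card * b := by
  have hbip : (G ⊓ crossingGraph A T).IsBipartiteWith A (A : Set V)ᶜ :=
    ⟨disjoint_compl_right, fun _ _ h => (crossingGraph_isBipartiteWith A T).mem_of_adj h.2⟩
  rw [ncard_edgeSet_eq_sum_deg hbip, Nat.cast_sum, ← nsmul_eq_mul]
  refine Finset.sum_le_card_nsmul _ _ _ fun v hv => le_trans ?_ (hH v hv)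
  refine Nat.cast_le.2 (Set.ncard_le_ncard fun w hw => ?_)
  exact hGH v hv w ((crossingGraph_adj_of_mem hv).1 hw.2).1 hw.1

end CrossingGraph

section Deterministic

/-- The canonical choice of the set `T_v` in `RE` and `Complements`: all the vertices joined to
`v` by a path of `R ∪ P` on the vertex set of `P`. It depends only on `R` and `P`, which keeps the
number of sets in the union bound small. -/
def spanningEnds [DecidableEq V] (R : SimpleGraph V) (P : List V) (v : V) : Set V :=
  {w | ∃ Q : List V, IsPathOn (R ⊔ listGraph P) Q ∧ Q.head? = some v ∧ Q.getLast? = some w ∧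
    Q.toFinset = P.toFinset}

variable {n : ℕ} {p ε c : ℝ}

lemma RE.exists_spanningEnds_of_not_complements {R G : SimpleGraph (Fin n)} (hR : RE n c R)
    (hG : ¬ Complements n c R G) :
    ∃ P : List (Fin n), P.Nodup ∧ ∃ S : Set (Fin n), c * n ≤ S.ncard ∧
      ∀ v ∈ S, c * n ≤ (spanningEnds R P v).ncard ∧
        ∀ w ∈ spanningEnds R P v, ¬ (R ⊔ G).Adj v w := by
  simp only [Complements, not_forall] at hG
  obtain ⟨P, hP, hPnodup, hG⟩ := hG
  rw [not_or] at hG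
  obtain ⟨S, hS, T, hT, hpath⟩ := (hR.2 P hP hPnodup).resolve_left hG.1
  have hends (v) (hv : v ∈ S) : c * n ≤ (spanningEnds R P v).ncard :=
    (hT v hv).trans (Nat.cast_le.2 (Set.ncard_le_ncard (hpath v hv)))
  refine ⟨P, hPnodup, S, hS, fun v hv => ⟨hends v hv, fun w hw hadj => hG.2 ?_⟩⟩
  exact ⟨S, hS, spanningEnds R P, hends, fun _ _ _ h => h, v, hv, w, hw, hadj⟩

lemma PosaFamily.exists_finset_deg_le {H : SimpleGraph (Fin n)} (hH : PosaFamily n p ε H)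
    {k m : ℕ} (hk : (k : ℝ) + 1 < n / 2) {S : Set (Fin n)} (hS : k + m ≤ S.ncard) :
    ∃ A : Finset (Fin n), ↑A ⊆ S ∧ A.card = m ∧
      ∀ v ∈ A, (deg H v : ℝ) ≤ (n - (k + 1)) * p - ε * n * p := by
  obtain ⟨σ, hσ, hanti, hdeg⟩ := hH
  have hkn : k < n := by
    have : (k : ℝ) < n := by linarith [n.cast_nonneg (α := ℝ)]
    exact_mod_cast this
  let first : Finset (Fin n) := (Finset.Iio ⟨k, hkn⟩).image σ
  have hfirst : first.card ≤ k := by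
    simpa using Finset.card_image_le (s := Finset.Iio ⟨k, hkn⟩) (f := σ)
  have hm : m ≤ (S \ first).ncard := by
    have := Set.ncard_le_ncard_sdiff_add_ncard S (first : Set (Fin n))
    rw [Set.ncard_coe_finset] at this
    omega
  obtain ⟨A, hAS, hA⟩ := Set.exists_subset_card_eq hm
  lift A to Finset (Fin n) using A.toFinite
  refine ⟨A, hAS.trans Set.sdiff_subset, by simpa using hA, fun v hv => ?_⟩
  obtain ⟨i, rfl⟩ := hσ.2 v
  have hki : (⟨k, hkn⟩ : Fin n) ≤ i := by
    by_contra! h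
    exact (hAS hv).2 (Finset.mem_coe.2 (Finset.mem_image_of_mem σ (Finset.mem_Iio.2 h)))
  exact (Nat.cast_le.2 (hanti _ _ hki)).trans (hdeg ⟨k, hkn⟩ hk)

/-- For `s = (1 - ε + γ) / 2` and `m ≈ γ * n / 8`, the `m`-vertex set `A ⊆ S` avoids the first
`s * n - m` vertices of the degree sequence of `H`. Every vertex of `A` has at least `s * n - m`
neighbours in the crossing graph, but only degree `(1 - s - ε) * n * p + m * p` in `H`, and
`s - (1 - s - ε) = γ`. -/
lemma PosaFamily.exists_sparse_crossingGraph {γ : ℝ} (hp0 : 0 ≤ p) (hε1 : ε ≤ 1) (hγε : γ < ε)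
    (hc : 1 - ε + γ ≤ 2 * c) (hn : 8 ≤ γ * n) {G H : SimpleGraph (Fin n)}
    (hH : PosaFamily n p ε H) {S : Set (Fin n)} {T : Fin n → Set (Fin n)} (hS : c * n ≤ S.ncard)
    (hT : ∀ v ∈ S, c * n ≤ (T v).ncard) (hGH : ∀ v ∈ S, ∀ w ∈ T v, G.Adj v w → H.Adj v w) :
    ∃ A : Finset (Fin n), ↑A ⊆ S ∧ ((G ⊓ crossingGraph A T).edgeSet.ncard : ℝ) ≤
      (crossingGraph A T).edgeSet.ncard * p - (γ / 4) ^ 2 * (n ^ 2 * p) := by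
  have hn0 : (0 : ℝ) < n := Nat.cast_pos.2 (Nat.pos_of_ne_zero (by rintro rfl; norm_num at hn))
  set s := (1 - ε + γ) / 2 * n with hs
  have hsc : s ≤ c * n := mul_le_mul_of_nonneg_right (by linarith) hn0.le
  have hγs : γ * n ≤ 2 * s := by linarith [mul_nonneg (sub_nonneg.2 hε1) hn0.le]
  have hsn : s < n / 2 := by linarith [mul_pos (sub_pos.2 hγε) hn0]
  set m := ⌈γ * n / 8⌉₊
  have hm : γ * n / 8 ≤ m := Nat.le_ceil _
  have hm' : (m : ℝ) ≤ γ * n / 4 := by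
    linarith [Nat.ceil_lt_add_one (a := γ * n / 8) (by linarith)]
  obtain ⟨k, hk⟩ := Nat.exists_eq_add_of_le' (Nat.le_floor (show (m : ℝ) ≤ s by linarith))
  have hks : (k : ℝ) + m ≤ s := by
    exact_mod_cast hk ▸ Nat.floor_le (show 0 ≤ s by linarith)
  have hks' : s < k + m + 1 := by
    exact_mod_cast hk ▸ Nat.lt_floor_add_one s
  obtain ⟨A, hAS, hA, hdeg⟩ := hH.exists_finset_deg_le (k := k) (m := m) (by linarith)
    (by exact_mod_cast hks.trans (hsc.trans hS))
  refine ⟨A, hAS, ?_⟩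
  have hupper := ncard_edgeSet_inf_crossingGraph_le (fun v hv => hGH v (hAS hv)) hdeg
  have hlower := mul_sub_le_ncard_edgeSet_crossingGraph fun v hv => hsc.trans (hT v (hAS hv))
  rw [hA] at hupper hlower
  have hgap : (γ * n / 4) ^ 2 ≤ m * (γ * n - 2 * m) := by nlinarith
  calc ((G ⊓ crossingGraph A T).edgeSet.ncard : ℝ)
    _ ≤ m * ((n - (k + 1)) * p - ε * n * p) := hupper
    _ ≤ m * ((n - (s - m)) * p - ε * n * p) := by
      gcongr
      linarith
    _ = m * (s - m) * p - m * (γ * n - 2 * m) * p := by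
      rw [hs]
      ring
    _ ≤ (crossingGraph A T).edgeSet.ncard * p - (γ * n / 4) ^ 2 * p := by gcongr
    _ = (crossingGraph A T).edgeSet.ncard * p - (γ / 4) ^ 2 * (n ^ 2 * p) := by ring

lemma RE.exists_sparse_of_not_complements {γ : ℝ} (hp0 : 0 ≤ p) (hε1 : ε ≤ 1) (hγε : γ < ε)
    (hc : 1 - ε + γ ≤ 2 * c) (hn : 8 ≤ γ * n) {G H R : SimpleGraph (Fin n)}
    (hH : PosaFamily n p ε H) (hR : RE n c R) (hG : ¬ Complements n c R (G \ H)) :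
    ∃ P : List (Fin n), P.Nodup ∧ ∃ A : Finset (Fin n),
      ((G ⊓ (crossingGraph A (spanningEnds R P) \ R)).edgeSet.ncard : ℝ) ≤
        (crossingGraph A (spanningEnds R P) \ R).edgeSet.ncard * p -
          (γ / 4) ^ 2 * (n ^ 2 * p) := by
  obtain ⟨P, hP, S, hS, hT⟩ := hR.exists_spanningEnds_of_not_complements hG
  obtain ⟨A, hAS, hA⟩ := hH.exists_sparse_crossingGraph hp0 hε1 hγε hc hn hS
    (T := spanningEnds R P) (fun v hv => (hT v hv).1) (G := G) fun v hv w hw hadj => by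
      by_contra h
      exact (hT v hv).2 w hw (Or.inr ⟨hadj, h⟩)
  have hdisj : Disjoint (crossingGraph A (spanningEnds R P)) R :=
    disjoint_crossingGraph fun v hv w hw hadj => (hT v (hAS hv)).2 w hw (Or.inl hadj)
  exact ⟨P, hP, A, by rwa [hdisj.sdiff_eq_left]⟩

end Deterministic

lemma Pr_exists_not_complements_le {n : ℕ} {p ε c γ τ : ℝ} (hε1 : ε ≤ 1) (hγ0 : 0 < γ)
    (hγε : γ < ε) (hc : 1 - ε + γ ≤ 2 * c) (hτ : τ = (γ / 4) ^ 2) (hn : 8 ≤ γ * n)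
    (hp : 8 / τ ^ 2 * log n / n ≤ p) (hp1 : p ≤ 1) :
    Pr n p (fun G => ∃ H, PosaFamily n p ε H ∧ ∃ R ≤ G, RE n c R ∧
        (R.edgeSet.ncard : ℝ) ≤ (τ ^ 2 / 4) ^ 2 * n ^ 2 * p ∧ ¬ Complements n c R (G \ H)) ≤
      exp (-(n * log n)) := by
  have hτ0 : 0 < τ := hτ ▸ by positivity
  have hτ1 : τ ≤ 1 := hτ ▸ pow_le_one₀ (by positivity) (by linarith)
  have hn2 : (2 : ℝ) ≤ n := by nlinarith [n.cast_nonneg (α := ℝ)]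
  have hn0 : (0 : ℝ) < n := by linarith
  have hp0 : 0 ≤ p := le_trans (by positivity) hp
  let ι := {l : List (Fin n) // l.Nodup} × Finset (Fin n)
  let D (R : SimpleGraph (Fin n)) (i : ι) : SimpleGraph (Fin n) :=
    crossingGraph i.2 (spanningEnds R i.1) \ R
  have hexponent : 4 * (n * log n) ≤ τ ^ 2 / 2 * (n ^ 2 * p) := by
    calc 4 * (n * log n) = τ ^ 2 / 2 * (n ^ 2 * (8 / τ ^ 2 * log n / n)) := by
          field_simp
          ring
      _ ≤ τ ^ 2 / 2 * (n ^ 2 * p) := by gcongr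
  calc
    _ ≤ Pr n p (fun G => ∃ R ≤ G, (R.edgeSet.ncard : ℝ) ≤ (τ ^ 2 / 4) ^ 2 * (n ^ 2 * p) ∧
          ∃ i, ((G ⊓ D R i).edgeSet.ncard : ℝ) ≤
            (D R i).edgeSet.ncard * p - τ * (n ^ 2 * p)) := by
      refine Pr_mono hp0 hp1 fun G ⟨H, hH, R, hRG, hR, hcard, hG⟩ => ?_
      obtain ⟨P, hP, A, hA⟩ := hR.exists_sparse_of_not_complements hp0 hε1 hγε hc hn hH hG
      exact ⟨R, hRG, mul_assoc (_ ^ 2) _ p ▸ hcard, (⟨P, hP⟩, A), hτ ▸ hA⟩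
    _ ≤ Fintype.card ι * exp (-(τ ^ 2 / 2 * (n ^ 2 * p))) :=
      Pr_exists_sparse_le hp0 hp1 D (fun _ _ => disjoint_sdiff_self_right) hτ0 hτ1
    _ ≤ exp (3 * (n * log n)) * exp (-(4 * (n * log n))) := by
      gcongr
      exact card_nodup_list_prod_finset_le (by exact_mod_cast hn2)
    _ = exp (-(n * log n)) := by
      rw [← exp_add]
      ring_nf

lemma tendsto_exp_neg_mul_log : Tendsto (fun n : ℕ => exp (-(n * log n))) atTop (nhds 0) :=
  tendsto_exp_neg_atTop_nhds_zero.comp <| tendsto_natCast_atTop_atTop.atTop_mul_atTop₀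
    (tendsto_log_atTop.comp tendsto_natCast_atTop_atTop)

theorem resilient_complements_general (ε c : ℝ) (hε : 0 < ε) (hε1 : ε ≤ 1)
    (hc : (1 - ε) / 2 < c) :
    ∃ C δ : ℝ, 0 < C ∧ 0 < δ ∧ ∀ η : ℝ, 0 < η → ∃ N : ℕ, ∀ n : ℕ, N ≤ n →
      ∀ p : ℝ, C * Real.log n / n ≤ p → p ≤ 1 →
        1 - η ≤ Pr n p (fun G =>
          ∀ H : SimpleGraph (Fin n), PosaFamily n p ε H →
            ∀ R : SimpleGraph (Fin n), R ≤ G → RE n c R →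
              (R.edgeSet.ncard : ℝ) ≤ δ * n ^ 2 * p → Complements n c R (G \ H)) := by
  obtain ⟨γ, hγ0, hγ⟩ := exists_between (show 0 < min ε (2 * c - 1 + ε) from
    lt_min hε (by linarith))
  obtain ⟨hγε, hγc⟩ := lt_min_iff.1 hγ
  set τ := (γ / 4) ^ 2 with hτ
  refine ⟨8 / τ ^ 2, (τ ^ 2 / 4) ^ 2, by positivity, by positivity, fun η hη => ?_⟩
  have hlarge : ∀ᶠ n : ℕ in atTop, 8 ≤ γ * n :=
    (tendsto_natCast_atTop_atTop.const_mul_atTop hγ0).eventually_ge_atTop 8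
  obtain ⟨N, hN⟩ := eventually_atTop.1
    (hlarge.and (tendsto_exp_neg_mul_log.eventually_le_const hη))
  refine ⟨N, fun n hn p hp hp1 => sub_le_comm.1 ?_⟩
  rw [one_sub_Pr]
  push Not
  exact (Pr_exists_not_complements_le hε1 hγ0 hγε (by linarith) hτ (hN n hn).1 hp hp1).trans
    (hN n hn).2

/-- Lemma 4.8.  For every `0 < ε < 1` there exist `C, δ > 0` such
that, for `p ≥ C log n / n`, a.a.s. for every `H ∈ H^ε_{n,p}(G)`, the graph `G ∖ H`
complements every graph `R ⊆ G` satisfying `RE(1/2 + ε/4)` with at most `δn²p` edges. -/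
theorem resilient_complements (ε : ℝ) (hε : 0 < ε) (hε1 : ε < 1) :
    ∃ C δ : ℝ, 0 < C ∧ 0 < δ ∧ ∀ η : ℝ, 0 < η → ∃ N : ℕ, ∀ n : ℕ, N ≤ n →
      ∀ p : ℝ, C * Real.log n / n ≤ p → p ≤ 1 →
        1 - η ≤ Pr n p (fun G =>
          ∀ H : SimpleGraph (Fin n), H ≤ G → PosaFamily n p ε H →
            ∀ R : SimpleGraph (Fin n), R ≤ G → RE n (1/2 + ε/4) R →
              (R.edgeSet.ncard : ℝ) ≤ δ * n^2 * p →
              Complements n (1/2 + ε/4) R (G \ H)) := by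
  obtain ⟨C, δ, hC, hδ, h⟩ := resilient_complements_general ε (1/2 + ε/4) hε hε1.le (by linarith)
  refine ⟨C, δ, hC, hδ, fun η hη => (h η hη).imp fun N hN n hn p hp hp1 => ?_⟩
  have hp0 : 0 ≤ p := le_trans (by positivity) hp
  exact (hN n hn p hp hp1).trans (Pr_mono hp0 hp1 fun _ hG H _ => hG H)

end Resilience
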